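/- arXiv:2510.11657 — 2 statements merged into one kernel-verified Lean document; each statement's English description precedes it below -/
import Mathlib

section
/- Let (Ω, F, P) be a probability space, d ≥ 1, let X : Ω → ℝ^d be a random vector with E‖X‖² < ∞, and let Π : ℝ^d → ℝ^{d×d} be a Borel measurable matrix field with E‖Π(X)‖_F² < ∞ (Frobenius norm). If E[(DΦ)(X) : Π(X)] = 0 for every smooth compactly supported vector field Φ : ℝ^d → ℝ^d, where A : B = Tr(AᵀB) denotes the Frobenius inner product and (DΦ)(x) is the Jacobian of Φ at x, then E[Tr Π(X)] = 0. -/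
open Set MeasureTheory

/-!
Test the weak identity against `Φ_R(x) = η(x / R) • T x`, where `η` is a smooth bump equal to `1`
near the origin and `T` is linear. Since `Φ_R(x) = R • Φ_1(x / R)`, its derivative is
`DΦ_R(x) = DΦ_1(x / R)`: it is bounded uniformly in `R` and equals `T` once `R` is large compared
with `‖x‖`. Dominated convergence as `R → ∞`, with dominating function a multiple of `‖Π(X)‖`,
therefore gives `E[T : Π(X)] = 0`, and `T = id` is the case of the trace.
-/

open Filter
open scoped Matrix Topology

theorem tendsto_integral_clm_apply_of_bounded {α Ω V W : Type*} [MeasurableSpace Ω] {μ : Measure Ω}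
    [NormedAddCommGroup V] [NormedSpace ℝ V] [NormedAddCommGroup W] [NormedSpace ℝ W]
    {l : Filter α} [l.IsCountablyGenerated] {L : Ω → V →L[ℝ] W} (hL : Integrable L μ)
    {g : α → Ω → V} {v : Ω → V} (C : ℝ)
    (hg : ∀ᶠ a in l, AEStronglyMeasurable (g a) μ)
    (hbound : ∀ᶠ a in l, ∀ᵐ ω ∂μ, ‖g a ω‖ ≤ C)
    (hlim : ∀ᵐ ω ∂μ, Tendsto (fun a => g a ω) l (𝓝 (v ω))) :
    Tendsto (fun a => ∫ ω, L ω (g a ω) ∂μ) l (𝓝 (∫ ω, L ω (v ω) ∂μ)) := by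
  refine tendsto_integral_filter_of_dominated_convergence (fun ω => ‖L ω‖ * C) ?_ ?_
    (hL.norm.mul_const C) ?_
  · filter_upwards [hg] with a ha
    exact (ContinuousLinearMap.id ℝ (V →L[ℝ] W)).aestronglyMeasurable_comp₂
      hL.aestronglyMeasurable ha
  · filter_upwards [hbound] with a ha
    filter_upwards [ha] with ω hω
    exact (L ω).le_opNorm_of_le hω
  · filter_upwards [hlim] with ω hω
    exact ((L ω).continuous.tendsto (v ω)).comp hω

theorem memLp_two_of_integrable_sum_sq {Ω ι : Type*} [MeasurableSpace Ω]
    {μ : Measure Ω} {s : Finset ι} {f : ι → Ω → ℝ}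
    (hsum : Integrable (fun ω => ∑ i ∈ s, f i ω ^ 2) μ) {i : ι} (hi : i ∈ s)
    (hf : AEStronglyMeasurable (f i) μ) : MemLp (f i) 2 μ := by
  refine (memLp_two_iff_integrable_sq hf).2 (hsum.mono' (hf.pow 2) (.of_forall fun ω => ?_))
  rw [Real.norm_of_nonneg (sq_nonneg _)]
  exact Finset.single_le_sum (f := fun i => f i ω ^ 2) (fun _ _ => sq_nonneg _) hi

theorem integrable_of_integrable_sum_sum_sq {Ω ι κ : Type*} [MeasurableSpace Ω] {μ : Measure Ω}
    [IsFiniteMeasure μ] [Fintype ι] [Fintype κ] {A : Ω → Matrix ι κ ℝ}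
    (hsum : Integrable (fun ω => ∑ i, ∑ k, A ω i k ^ 2) μ) {i : ι} {k : κ}
    (hA : AEStronglyMeasurable (fun ω => A ω i k) μ) : Integrable (fun ω => A ω i k) μ := by
  simp only [← Fintype.sum_prod_type'] at hsum
  exact (memLp_two_of_integrable_sum_sq (f := fun p : ι × κ => fun ω => A ω p.1 p.2) hsum
    (Finset.mem_univ (i, k)) hA).integrable one_le_two

section CutoffField

variable {E F : Type*} [NormedAddCommGroup E] [NormedSpace ℝ E] [HasContDiffBump E]
  [NormedAddCommGroup F] [NormedSpace ℝ F]

/-- The linear vector field `T` cut off at scale `R`: the test field `Φ_R(x) = η(x / R) • T x`,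
where the profile `η` is the bump function `f`. -/
noncomputable def cutoffField (f : ContDiffBump (0 : E)) (T : E →L[ℝ] F) (R : ℝ) (x : E) : F :=
  f (R⁻¹ • x) • T x

variable (f : ContDiffBump (0 : E)) (T : E →L[ℝ] F)

theorem contDiff_cutoffField {n : ℕ∞} (R : ℝ) : ContDiff ℝ n (cutoffField f T R) :=
  (f.contDiff.comp (contDiff_const_smul R⁻¹)).smul T.contDiff

variable {R : ℝ}

theorem hasCompactSupport_cutoffField [FiniteDimensional ℝ E] (hR : R ≠ 0) :
    HasCompactSupport (cutoffField f T R) :=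
  (f.hasCompactSupport.comp_homeomorph
    (Homeomorph.smulOfNeZero R⁻¹ (inv_ne_zero hR))).smul_right

theorem cutoffField_eq_smul_cutoffField_one (hR : R ≠ 0) :
    cutoffField f T R = fun x => R • cutoffField f T 1 (R⁻¹ • x) := by
  ext x
  simp [cutoffField, smul_comm R, hR]

theorem fderiv_cutoffField (hR : R ≠ 0) (x : E) :
    fderiv ℝ (cutoffField f T R) x = fderiv ℝ (cutoffField f T 1) (R⁻¹ • x) := by
  rw [cutoffField_eq_smul_cutoffField_one f T hR, ← Pi.smul_def, fderiv_const_smul_field,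
    Pi.smul_apply, fderiv_comp_smul, smul_inv_smul₀ hR]

theorem exists_norm_fderiv_cutoffField_le [FiniteDimensional ℝ E] :
    ∃ C, ∀ R ≠ 0, ∀ x, ‖fderiv ℝ (cutoffField f T R) x‖ ≤ C := by
  obtain ⟨C, hC⟩ := ((hasCompactSupport_cutoffField f T one_ne_zero).fderiv
    (𝕜 := ℝ)).exists_bound_of_continuous
      ((contDiff_cutoffField (n := 1) f T 1).continuous_fderiv one_ne_zero)
  exact ⟨C, fun R hR x => fderiv_cutoffField f T hR x ▸ hC _⟩

theorem eventually_fderiv_cutoffField_eq (x : E) :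
    ∀ᶠ R in atTop, fderiv ℝ (cutoffField f T R) x = T := by
  have cutoff_eq : cutoffField f T 1 =ᶠ[𝓝 0] T := by
    filter_upwards [f.eventuallyEq_one] with y hy
    simp [cutoffField, hy]
  have scaled_tendsto_zero : Tendsto (fun R : ℝ => R⁻¹ • x) atTop (𝓝 0) := by
    simpa using (tendsto_inv_atTop_zero (𝕜 := ℝ)).smul_const x
  filter_upwards [scaled_tendsto_zero.eventually (cutoff_eq.fderiv (𝕜 := ℝ)), eventually_ne_atTop 0]
    with R hfderiv hR
  rw [fderiv_cutoffField f T hR, hfderiv, T.fderiv]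

end CutoffField

set_option maxSynthPendingDepth 3 in
theorem integral_clm_apply_eq_zero_of_weak_divergence_free {Ω E F W : Type*} [MeasurableSpace Ω]
    [NormedAddCommGroup E] [NormedSpace ℝ E] [FiniteDimensional ℝ E]
    [NormedAddCommGroup F] [NormedSpace ℝ F] [NormedAddCommGroup W] [NormedSpace ℝ W]
    {μ : Measure Ω} {X : Ω → E} (hX : AEStronglyMeasurable X μ)
    {L : Ω → (E →L[ℝ] F) →L[ℝ] W} (hL : Integrable L μ)
    (hweak : ∀ Φ : E → F, ContDiff ℝ (⊤ : ℕ∞) Φ → HasCompactSupport Φ →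
      ∫ ω, L ω (fderiv ℝ Φ (X ω)) ∂μ = 0)
    (T : E →L[ℝ] F) : ∫ ω, L ω T ∂μ = 0 := by
  let η : ContDiffBump (0 : E) := default
  obtain ⟨C, hC⟩ := exists_norm_fderiv_cutoffField_le η T
  have hlim : Tendsto (fun R => ∫ ω, L ω (fderiv ℝ (cutoffField η T R) (X ω)) ∂μ) atTop
      (𝓝 (∫ ω, L ω T ∂μ)) := by
    refine tendsto_integral_clm_apply_of_bounded hL C (.of_forall fun R => ?_) ?_
      (.of_forall fun ω => tendsto_nhds_of_eventually_eq
        (eventually_fderiv_cutoffField_eq η T (X ω)))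
    · exact ((contDiff_cutoffField (n := 1) η T R).continuous_fderiv
        one_ne_zero).comp_aestronglyMeasurable hX
    · filter_upwards [eventually_ne_atTop 0] with R hR
      exact .of_forall fun ω => hC R hR (X ω)
  have hzero : ∀ᶠ R in atTop, ∫ ω, L ω (fderiv ℝ (cutoffField η T R) (X ω)) ∂μ = 0 := by
    filter_upwards [eventually_ne_atTop 0] with R hR
    exact hweak _ (contDiff_cutoffField η T R) (hasCompactSupport_cutoffField η T hR)
  exact tendsto_nhds_unique hlim (tendsto_nhds_of_eventually_eq hzero)

section Matrix

variable {ι κ : Type*} [Fintype ι] [Fintype κ] [DecidableEq ι]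

/-- The Frobenius pairing `B ↦ B : M` of linear maps with the matrix `M`. Rows are indexed by
directions, as in the gradient convention `(DΦ) i k = ∂ᵢ Φₖ`: the `(i, k)` entry of a linear map
`B` is the `k`-th coordinate of `B eᵢ`. -/
noncomputable def frobeniusPairing (M : Matrix ι κ ℝ) :
    (EuclideanSpace ℝ ι →L[ℝ] EuclideanSpace ℝ κ) →L[ℝ] ℝ :=
  ∑ i, ∑ k, M i k • (EuclideanSpace.proj k ∘L
    ContinuousLinearMap.apply ℝ (EuclideanSpace ℝ κ) (EuclideanSpace.single i (1 : ℝ)))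

theorem frobeniusPairing_apply (M : Matrix ι κ ℝ)
    (B : EuclideanSpace ℝ ι →L[ℝ] EuclideanSpace ℝ κ) :
    frobeniusPairing M B = ∑ i, ∑ k, B (EuclideanSpace.single i 1) k * M i k := by
  simp [frobeniusPairing, mul_comm]

theorem frobeniusPairing_toLpLin_transpose (M T : Matrix ι κ ℝ) :
    frobeniusPairing M (Matrix.toLpLin 2 2 Tᵀ).toContinuousLinearMap = (Tᵀ * M).trace := by
  simpa [frobeniusPairing_apply, Matrix.trace, Matrix.mul_apply] using Finset.sum_comm

theorem frobeniusPairing_fderiv (M : Matrix ι κ ℝ)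
    {Φ : EuclideanSpace ℝ ι → EuclideanSpace ℝ κ} {x : EuclideanSpace ℝ ι}
    (hΦ : DifferentiableAt ℝ Φ x) :
    frobeniusPairing M (fderiv ℝ Φ x) =
      ∑ i, ∑ k, fderiv ℝ (fun y => Φ y k) x (EuclideanSpace.single i 1) * M i k := by
  have fderiv_coord (k : κ) :
      fderiv ℝ (fun y => Φ y k) x = EuclideanSpace.proj k ∘L fderiv ℝ Φ x :=
    ((EuclideanSpace.proj (𝕜 := ℝ) k).hasFDerivAt.comp x hΦ.hasFDerivAt).fderiv
  simp [frobeniusPairing_apply, fderiv_coord]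

set_option maxSynthPendingDepth 3 in
theorem integrable_frobeniusPairing {Ω : Type*} [MeasurableSpace Ω] {μ : Measure Ω}
    {A : Ω → Matrix ι κ ℝ} (hA : ∀ i k, Integrable (fun ω => A ω i k) μ) :
    Integrable (fun ω => frobeniusPairing (A ω)) μ :=
  integrable_finsetSum _ fun i _ => integrable_finsetSum _ fun k _ => (hA i k).smul_const _

theorem expected_trace_zero_of_weak_divergence_free_general
    {Ω : Type*} [MeasurableSpace Ω] {μ : Measure Ω}
    {X : Ω → EuclideanSpace ℝ ι} (hX : AEStronglyMeasurable X μ)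
    {A : Ω → Matrix ι κ ℝ} (hA : ∀ i k, Integrable (fun ω => A ω i k) μ)
    (hweak : ∀ Φ : EuclideanSpace ℝ ι → EuclideanSpace ℝ κ,
      ContDiff ℝ (⊤ : ℕ∞) Φ → HasCompactSupport Φ →
      ∫ ω, (∑ i, ∑ k,
        fderiv ℝ (fun y => Φ y k) (X ω) (EuclideanSpace.single i 1) * A ω i k) ∂μ = 0)
    (T : Matrix ι κ ℝ) : ∫ ω, (Tᵀ * A ω).trace ∂μ = 0 := by
  have hpairing (Φ : EuclideanSpace ℝ ι → EuclideanSpace ℝ κ) (hΦ : ContDiff ℝ (⊤ : ℕ∞) Φ)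
      (hΦc : HasCompactSupport Φ) : ∫ ω, frobeniusPairing (A ω) (fderiv ℝ Φ (X ω)) ∂μ = 0 := by
    simpa only [frobeniusPairing_fderiv _ (hΦ.differentiable (by simp) _)] using hweak Φ hΦ hΦc
  simpa only [frobeniusPairing_toLpLin_transpose] using
    integral_clm_apply_eq_zero_of_weak_divergence_free hX (integrable_frobeniusPairing hA) hpairing
      (Matrix.toLpLin 2 2 Tᵀ).toContinuousLinearMap

end Matrix

/-- If `E‖X‖² < ∞`, `E‖Π(X)‖_F² < ∞`, and `E[(DΦ)(X) : Π(X)] = 0` for every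
smooth compactly supported vector field `Φ`, then `E[Tr Π(X)] = 0`. -/
theorem expected_trace_zero_of_weak_divergence_free
    {Ω : Type*} [MeasurableSpace Ω] (P : Measure Ω) [IsProbabilityMeasure P]
    (d : ℕ) (hd : 1 ≤ d)
    (X : Ω → EuclideanSpace ℝ (Fin d)) (hXmeas : Measurable X)
    (hX2 : Integrable (fun ω => ‖X ω‖ ^ 2) P)
    (Pmat : EuclideanSpace ℝ (Fin d) → Matrix (Fin d) (Fin d) ℝ)
    (hPmeas : ∀ i j : Fin d, Measurable fun x => Pmat x i j)
    (hP2 : Integrable (fun ω => ∑ i, ∑ j, (Pmat (X ω) i j) ^ 2) P)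
    (hweak : ∀ Φ : EuclideanSpace ℝ (Fin d) → EuclideanSpace ℝ (Fin d),
        ContDiff ℝ (⊤ : ℕ∞) Φ → HasCompactSupport Φ →
        ∫ ω, (∑ i, ∑ j,
            fderiv ℝ (fun y => Φ y j) (X ω) (EuclideanSpace.single i 1)
              * Pmat (X ω) i j) ∂P = 0) :
    ∫ ω, (∑ i, Pmat (X ω) i i) ∂P = 0 := by
  simpa [Matrix.trace] using expected_trace_zero_of_weak_divergence_free_general
    (A := fun ω => Pmat (X ω)) hXmeas.aestronglyMeasurable
    (fun i j => integrable_of_integrable_sum_sum_sq hP2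
      ((hPmeas i j).comp hXmeas).aestronglyMeasurable) hweak 1
end

section
/- Let (Ω, F, P) be a probability space, d ≥ 1, and let X : [0,1] × Ω → ℝ^d (written X_t) be a stochastic process all of whose sample paths are twice continuously differentiable, with pathwise derivatives Ẋ_t and Ẍ_t. Fix t ∈ [0,1] and assume E‖X_t‖² < ∞, E‖Ẋ_t‖² < ∞, E‖Ẍ_t‖² < ∞, and E‖Π_t(X_t)‖_F² < ∞, where Π_t : ℝ^d → ℝ^{d×d} is a Borel measurable matrix field such that Π_t(X_t) is a version of E[Ẋ_t ⊗ Ẋ_t | σ(X_t)] − E[Ẋ_t | σ(X_t)] ⊗ E[Ẋ_t | σ(X_t)]. Suppose that for every smooth compactly supported vector field Φ : ℝ^d → ℝ^d, −E[(DΦ)(X_t) : Π_t(X_t)] = E[Φ(X_t) · Ẍ_t]. Then E[X_t · Ẍ_t] ≤ 0. -/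
open Set MeasureTheory

/-!
Testing the weak balance law with `Φ x = x` gives `-E[Tr Π_t(X_t)] = E[X_t · Ẍ_t]`, and the trace is
a.s. nonnegative because its terms are conditional variances. As the identity is not compactly
supported, it is replaced by the truncations `T_r x = χ(x / r) x`, `χ` a smooth bump function. They
satisfy `‖T_r x‖ ≤ ‖x‖`, and since `T_r = r T_1(· / r)`, the derivatives `DT_r` are bounded
uniformly in `r`; as `r → ∞` both sides of the balance law converge by dominated convergence.
-/

section RadialTruncation

open Filter Topology

variable {E : Type*} [NormedAddCommGroup E] [NormedSpace ℝ E] [HasContDiffBump E]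

/-- The identity field cut off smoothly at radius comparable to `r`: for `r > 0` it is `x` on the
ball of radius `r` and `0` outside the ball of radius `2 * r`. -/
noncomputable def radialTruncation (r : ℝ) (x : E) : E :=
  (⟨1, 2, one_pos, one_lt_two⟩ : ContDiffBump (0 : E)) (r⁻¹ • x) • x

lemma radialTruncation_eq_smul {r : ℝ} (hr : r ≠ 0) (x : E) :
    radialTruncation r x = r • radialTruncation 1 (r⁻¹ • x) := by
  rw [radialTruncation, radialTruncation, inv_one, one_smul, smul_comm, smul_inv_smul₀ hr]

lemma contDiff_radialTruncation {n : ℕ∞} (r : ℝ) :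
    ContDiff ℝ n (radialTruncation r : E → E) :=
  (ContDiffBump.contDiff _ |>.comp (contDiff_const_smul _)).smul contDiff_id

lemma hasCompactSupport_radialTruncation [FiniteDimensional ℝ E] {r : ℝ} (hr : r ≠ 0) :
    HasCompactSupport (radialTruncation r : E → E) :=
  ((ContDiffBump.hasCompactSupport _).comp_smul (inv_ne_zero hr)).smul_right

lemma norm_radialTruncation_le (r : ℝ) (x : E) : ‖radialTruncation r x‖ ≤ ‖x‖ := by
  rw [radialTruncation, norm_smul, Real.norm_of_nonneg (ContDiffBump.nonneg _)]
  exact mul_le_of_le_one_left (norm_nonneg x) (ContDiffBump.le_one _)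

lemma radialTruncation_of_norm_lt {r : ℝ} {x : E} (hx : ‖x‖ < r) : radialTruncation r x = x := by
  have hr : 0 < r := (norm_nonneg x).trans_lt hx
  have hmem : r⁻¹ • x ∈ Metric.closedBall (0 : E) 1 := by
    rw [mem_closedBall_zero_iff, norm_smul, norm_inv, Real.norm_of_nonneg hr.le,
      inv_mul_le_one₀ hr]
    exact hx.le
  rw [radialTruncation, ContDiffBump.one_of_mem_closedBall _ hmem, one_smul]

lemma eventually_radialTruncation_eventuallyEq_id (x : E) :
    ∀ᶠ r in atTop, radialTruncation r =ᶠ[𝓝 x] id := by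
  filter_upwards [eventually_gt_atTop ‖x‖] with r hr
  filter_upwards [continuous_norm.continuousAt.eventually_lt_const hr] with y hy
  exact radialTruncation_of_norm_lt hy

lemma tendsto_radialTruncation (x : E) :
    Tendsto (fun r : ℝ => radialTruncation r x) atTop (𝓝 x) :=
  tendsto_nhds_of_eventually_eq <|
    (eventually_radialTruncation_eventuallyEq_id x).mono fun _ h => h.eq_of_nhds

lemma tendsto_fderiv_radialTruncation (x : E) :
    Tendsto (fun r : ℝ => fderiv ℝ (radialTruncation r) x) atTop
      (𝓝 (ContinuousLinearMap.id ℝ E)) :=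
  tendsto_nhds_of_eventually_eq <|
    (eventually_radialTruncation_eventuallyEq_id x).mono fun _ h => h.fderiv_eq.trans fderiv_id

lemma fderiv_radialTruncation_eq {r : ℝ} (hr : r ≠ 0) (x : E) :
    fderiv ℝ (radialTruncation r) x = fderiv ℝ (radialTruncation 1) (r⁻¹ • x) := by
  have hscale : (radialTruncation r : E → E) = r • fun y => radialTruncation 1 (r⁻¹ • y) :=
    funext fun y => radialTruncation_eq_smul hr y
  rw [hscale, fderiv_const_smul_field, Pi.smul_apply, fderiv_comp_smul, smul_inv_smul₀ hr]

variable (E) in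
lemma exists_norm_fderiv_radialTruncation_le [FiniteDimensional ℝ E] :
    ∃ C, ∀ r : ℝ, r ≠ 0 → ∀ x : E, ‖fderiv ℝ (radialTruncation r) x‖ ≤ C := by
  obtain ⟨C, hC⟩ := ((hasCompactSupport_radialTruncation (E := E) one_ne_zero).fderiv
    ℝ).exists_bound_of_continuous
      ((contDiff_radialTruncation (n := ⊤) 1).continuous_fderiv (by simp))
  refine ⟨C, fun r hr x => ?_⟩
  rw [fderiv_radialTruncation_eq hr]
  exact hC _

end RadialTruncation

section WeakBalance

open Filter Topology

variable {Ω : Type*} [MeasurableSpace Ω] {μ : Measure Ω}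

lemma tendsto_integral_clm_apply_comp {ι S F : Type*} [TopologicalSpace S]
    [NormedAddCommGroup F] [NormedSpace ℝ F] {l : Filter ι} [l.IsCountablyGenerated] {X : Ω → S}
    {L : Ω → StrongDual ℝ F} {f : ι → S → F} {g : S → F} {b : S → ℝ}
    (hX : AEStronglyMeasurable X μ) (hL : AEStronglyMeasurable L μ)
    (hf : ∀ᶠ n in l, Continuous (f n)) (hfb : ∀ᶠ n in l, ∀ x, ‖f n x‖ ≤ b x)
    (hLb : Integrable (fun ω => ‖L ω‖ * b (X ω)) μ)
    (hfg : ∀ x, Tendsto (fun n => f n x) l (𝓝 (g x))) :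
    Tendsto (fun n => ∫ ω, L ω (f n (X ω)) ∂μ) l (𝓝 (∫ ω, L ω (g (X ω)) ∂μ)) := by
  refine tendsto_integral_filter_of_dominated_convergence _ ?_ ?_ hLb ?_
  · filter_upwards [hf] with n hn
    exact isBoundedBilinearMap_apply.continuous.comp_aestronglyMeasurable
      (hL.prodMk (hn.comp_aestronglyMeasurable hX))
  · filter_upwards [hfb] with n hn
    exact .of_forall fun ω => (L ω).le_opNorm_of_le (hn (X ω))
  · exact .of_forall fun ω => ((L ω).continuous.tendsto _).comp (hfg (X ω))

-- The norm on `StrongDual ℝ (E →L[ℝ] E)` is not found at the default synthesis depth.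
set_option maxSynthPendingDepth 3 in
lemma neg_integral_clm_apply_id_eq_of_weak_balance {E : Type*}
    [NormedAddCommGroup E] [NormedSpace ℝ E] [FiniteDimensional ℝ E] {X : Ω → E}
    {L : Ω → StrongDual ℝ (E →L[ℝ] E)} {α : Ω → StrongDual ℝ E}
    (hX : AEStronglyMeasurable X μ) (hα : AEStronglyMeasurable α μ)
    (hL : Integrable L μ) (hαX : Integrable (fun ω => ‖α ω‖ * ‖X ω‖) μ)
    (hweak : ∀ Φ : E → E, ContDiff ℝ (⊤ : ℕ∞) Φ → HasCompactSupport Φ →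
      -∫ ω, L ω (fderiv ℝ Φ (X ω)) ∂μ = ∫ ω, α ω (Φ (X ω)) ∂μ) :
    -∫ ω, L ω (ContinuousLinearMap.id ℝ E) ∂μ = ∫ ω, α ω (X ω) ∂μ := by
  obtain ⟨C, hC⟩ := exists_norm_fderiv_radialTruncation_le E
  have hne : ∀ᶠ r : ℝ in atTop, r ≠ 0 := eventually_ne_atTop 0
  have hlim_fderiv : Tendsto (fun r => ∫ ω, L ω (fderiv ℝ (radialTruncation r) (X ω)) ∂μ) atTop
      (𝓝 (∫ ω, L ω (ContinuousLinearMap.id ℝ E) ∂μ)) :=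
    tendsto_integral_clm_apply_comp (b := fun _ => C) hX hL.aestronglyMeasurable
      (.of_forall fun r => (contDiff_radialTruncation (n := ⊤) r).continuous_fderiv (by simp))
      (hne.mono hC) (hL.norm.mul_const C) tendsto_fderiv_radialTruncation
  have hlim : Tendsto (fun r => ∫ ω, α ω (radialTruncation r (X ω)) ∂μ) atTop
      (𝓝 (∫ ω, α ω (X ω) ∂μ)) :=
    tendsto_integral_clm_apply_comp (g := id) hX hα
      (.of_forall fun r => (contDiff_radialTruncation (n := ⊤) r).continuous)
      (.of_forall norm_radialTruncation_le) hαX tendsto_radialTruncation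
  refine tendsto_nhds_unique (hlim_fderiv.neg.congr' ?_) hlim
  filter_upwards [hne] with r hr
  exact hweak _ (contDiff_radialTruncation r) (hasCompactSupport_radialTruncation hr)

end WeakBalance

section Frobenius

variable {ι : Type*} [Fintype ι] [DecidableEq ι]

/-- The functional `D ↦ D : A` on endomorphisms of Euclidean space, for a matrix `A`; the entry
`A i j` multiplies the `j`-th coordinate of the `i`-th partial derivative `D eᵢ`. -/
noncomputable def frobeniusDual (A : Matrix ι ι ℝ) :
    StrongDual ℝ (EuclideanSpace ℝ ι →L[ℝ] EuclideanSpace ℝ ι) :=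
  ∑ i, ∑ j, A i j •
    (EuclideanSpace.proj j ∘L ContinuousLinearMap.apply ℝ _ (EuclideanSpace.single i (1 : ℝ)))

lemma frobeniusDual_apply (A : Matrix ι ι ℝ)
    (D : EuclideanSpace ℝ ι →L[ℝ] EuclideanSpace ℝ ι) :
    frobeniusDual A D = ∑ i, ∑ j, D (EuclideanSpace.single i 1) j * A i j := by
  simp [frobeniusDual, mul_comm]

lemma frobeniusDual_id (A : Matrix ι ι ℝ) :
    frobeniusDual A (ContinuousLinearMap.id ℝ _) = A.trace := by
  simp [frobeniusDual_apply, Matrix.trace]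

lemma frobeniusDual_fderiv (A : Matrix ι ι ℝ) {Φ : EuclideanSpace ℝ ι → EuclideanSpace ℝ ι}
    {x : EuclideanSpace ℝ ι} (hΦ : DifferentiableAt ℝ Φ x) :
    frobeniusDual A (fderiv ℝ Φ x) =
      ∑ i, ∑ j, fderiv ℝ (fun y => Φ y j) x (EuclideanSpace.single i 1) * A i j := by
  have hcoord (j : ι) (v : EuclideanSpace ℝ ι) :
      fderiv ℝ (fun y => Φ y j) x v = fderiv ℝ Φ x v j := by
    have h := (EuclideanSpace.proj j : EuclideanSpace ℝ ι →L[ℝ] ℝ).hasFDerivAt.comp x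
      hΦ.hasFDerivAt
    exact congrArg (· v) h.fderiv
  simp only [frobeniusDual_apply, hcoord]

set_option maxSynthPendingDepth 3 in
lemma integrable_frobeniusDual {Ω : Type*} [MeasurableSpace Ω] {μ : Measure Ω}
    {A : Ω → Matrix ι ι ℝ} (hA : ∀ i j, Integrable (fun ω => A ω i j) μ) :
    Integrable (fun ω => frobeniusDual (A ω)) μ :=
  integrable_finsetSum _ fun i _ => integrable_finsetSum _ fun j _ => (hA i j).smul_const _

lemma neg_integral_trace_eq_integral_inner_of_weak_balance {Ω : Type*} [MeasurableSpace Ω]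
    {μ : Measure Ω} {X Y : Ω → EuclideanSpace ℝ ι} {A : Ω → Matrix ι ι ℝ}
    (hX : AEStronglyMeasurable X μ) (hY : AEStronglyMeasurable Y μ)
    (hA : ∀ i j, Integrable (fun ω => A ω i j) μ)
    (hXY : Integrable (fun ω => ‖X ω‖ * ‖Y ω‖) μ)
    (hweak : ∀ Φ : EuclideanSpace ℝ ι → EuclideanSpace ℝ ι,
      ContDiff ℝ (⊤ : ℕ∞) Φ → HasCompactSupport Φ →
      -∫ ω, (∑ i, ∑ j,
          fderiv ℝ (fun y => Φ y j) (X ω) (EuclideanSpace.single i 1) * A ω i j) ∂μ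
        = ∫ ω, (∑ i, Φ (X ω) i * Y ω i) ∂μ) :
    -∫ ω, (A ω).trace ∂μ = ∫ ω, (∑ i, X ω i * Y ω i) ∂μ := by
  have hinner (x y : EuclideanSpace ℝ ι) : innerSL ℝ y x = ∑ i, x i * y i := by
    simp [PiLp.inner_apply]
  have h := neg_integral_clm_apply_id_eq_of_weak_balance (L := fun ω => frobeniusDual (A ω))
    (α := fun ω => innerSL ℝ (Y ω)) hX ((innerSL ℝ).continuous.comp_aestronglyMeasurable hY)
    (integrable_frobeniusDual hA) (by simpa only [innerSL_apply_norm, mul_comm] using hXY)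
    fun Φ hΦ hΦc => by
      simp only [hinner, frobeniusDual_fderiv _ (hΦ.differentiable (by simp) _)]
      exact hweak Φ hΦ hΦc
  simpa only [hinner, frobeniusDual_id] using h

end Frobenius

section ConditionalCovariance

variable {Ω : Type*} {m m₀ : MeasurableSpace Ω} {P : Measure Ω} {Y Z : Ω → ℝ}

variable (m P) in
/-- The conditional covariance `E[YZ | m] - E[Y | m] E[Z | m]`. Like the conditional expectations in
it, it takes junk values unless `m ≤ m₀` and `Y`, `Z`, `YZ` are integrable. -/
noncomputable def condCov (Y Z : Ω → ℝ) : Ω → ℝ := fun ω =>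
  (P[(fun ω' => Y ω' * Z ω') | m]) ω - (P[Y | m]) ω * (P[Z | m]) ω

lemma integrable_condCov (hY : MemLp Y 2 P) (hZ : MemLp Z 2 P) :
    Integrable (condCov m P Y Z) P :=
  integrable_condExp.sub ((hY.condExp one_le_two).integrable_mul (hZ.condExp one_le_two))

lemma condVar_ae_eq_condCov_self [IsFiniteMeasure P] (hm : m ≤ m₀) (hY : MemLp Y 2 P) :
    ProbabilityTheory.condVar m Y P =ᵐ[P] condCov m P Y Y := by
  have h := ProbabilityTheory.condVar_ae_eq_condExp_sq_sub_sq_condExp hm hY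
  rwa [sq Y, sq (P[Y | m])] at h

lemma condCov_self_nonneg [IsFiniteMeasure P] (hm : m ≤ m₀) (hY : MemLp Y 2 P) :
    0 ≤ᵐ[P] condCov m P Y Y := by
  have hvar : 0 ≤ᵐ[P] ProbabilityTheory.condVar m Y P :=
    condExp_nonneg (.of_forall fun ω => sq_nonneg (Y ω - (P[Y | m]) ω))
  exact hvar.trans_eq (condVar_ae_eq_condCov_self hm hY)

lemma trace_nonneg_of_ae_eq_condCov [IsFiniteMeasure P] {ι : Type*} [Fintype ι]
    {V : Ω → EuclideanSpace ℝ ι} {A : Ω → Matrix ι ι ℝ} (hm : m ≤ m₀) (hV : MemLp V 2 P)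
    (hA : ∀ i, (fun ω => A ω i i) =ᵐ[P] condCov m P (fun ω => V ω i) fun ω => V ω i) :
    0 ≤ᵐ[P] fun ω => (A ω).trace := by
  have hdiag : ∀ᵐ ω ∂P, ∀ i, 0 ≤ A ω i i :=
    ae_all_iff.2 fun i => (condCov_self_nonneg hm (hV.eval_piLp i)).trans_eq (hA i).symm
  filter_upwards [hdiag] with ω hω
  exact Finset.sum_nonneg fun i _ => hω i

end ConditionalCovariance

theorem radial_acceleration_nonpos_of_weak_balance_general
    {Ω ι : Type*} [Fintype ι] [DecidableEq ι] {m m₀ : MeasurableSpace Ω} {P : Measure Ω}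
    [IsFiniteMeasure P] {X V A : Ω → EuclideanSpace ℝ ι} {M : Ω → Matrix ι ι ℝ} (hm : m ≤ m₀)
    (hX : AEStronglyMeasurable X P) (hV : MemLp V 2 P) (hA : AEStronglyMeasurable A P)
    (hXA : Integrable (fun ω => ‖X ω‖ * ‖A ω‖) P)
    (hReynolds : ∀ i j, (fun ω => M ω i j) =ᵐ[P]
      condCov m P (fun ω => V ω i) fun ω => V ω j)
    (hweak : ∀ Φ : EuclideanSpace ℝ ι → EuclideanSpace ℝ ι,
      ContDiff ℝ (⊤ : ℕ∞) Φ → HasCompactSupport Φ →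
      -∫ ω, (∑ i, ∑ j,
          fderiv ℝ (fun y => Φ y j) (X ω) (EuclideanSpace.single i 1) * M ω i j) ∂P
        = ∫ ω, (∑ i, Φ (X ω) i * A ω i) ∂P) :
    ∫ ω, (∑ i, X ω i * A ω i) ∂P ≤ 0 := by
  have hM (i j : ι) : Integrable (fun ω => M ω i j) P :=
    (integrable_condCov (hV.eval_piLp i) (hV.eval_piLp j)).congr (hReynolds i j).symm
  rw [← neg_integral_trace_eq_integral_inner_of_weak_balance hX hA hM hXA hweak, neg_nonpos]
  exact integral_nonneg_of_ae (trace_nonneg_of_ae_eq_condCov hm hV fun i => hReynolds i i)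

/-- For a process with C² sample paths and square-integrable
`X_t, Ẋ_t, Ẍ_t, Π_t(X_t)`, the weak balance law
`−E[(DΦ)(X_t) : Π_t(X_t)] = E[Φ(X_t)·Ẍ_t]` (for all smooth compactly supported `Φ`)
implies `E[X_t · Ẍ_t] ≤ 0`. -/
theorem radial_acceleration_nonpos_of_weak_balance
    {Ω : Type*} [MeasurableSpace Ω] (P : Measure Ω) [IsProbabilityMeasure P]
    (d : ℕ) (hd : 1 ≤ d)
    (X X' X'' : ℝ → Ω → EuclideanSpace ℝ (Fin d))
    (hXmeas : ∀ s, Measurable (X s))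
    (hX'meas : ∀ s, Measurable (X' s))
    (hX''meas : ∀ s, Measurable (X'' s))
    (hderiv : ∀ ω, ∀ s ∈ Icc (0:ℝ) 1,
        HasDerivWithinAt (fun u => X u ω) (X' s ω) (Icc (0:ℝ) 1) s)
    (hderiv' : ∀ ω, ∀ s ∈ Icc (0:ℝ) 1,
        HasDerivWithinAt (fun u => X' u ω) (X'' s ω) (Icc (0:ℝ) 1) s)
    (hcont : ∀ ω, ContinuousOn (fun s => X'' s ω) (Icc (0:ℝ) 1))
    (t : ℝ) (ht : t ∈ Icc (0:ℝ) 1)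
    (hX2 : Integrable (fun ω => ‖X t ω‖ ^ 2) P)
    (hX'2 : Integrable (fun ω => ‖X' t ω‖ ^ 2) P)
    (hX''2 : Integrable (fun ω => ‖X'' t ω‖ ^ 2) P)
    (Pmat : EuclideanSpace ℝ (Fin d) → Matrix (Fin d) (Fin d) ℝ)
    (hPmeas : ∀ i j : Fin d, Measurable fun x => Pmat x i j)
    (hP2 : Integrable (fun ω => ∑ i, ∑ j, (Pmat (X t ω) i j) ^ 2) P)
    (hReynolds : ∀ i j : Fin d,
        (fun ω => Pmat (X t ω) i j)
          =ᵐ[P] fun ω =>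
            (P[(fun ω' => X' t ω' i * X' t ω' j) |
                MeasurableSpace.comap (X t) inferInstance]) ω
            - (P[(fun ω' => X' t ω' i) | MeasurableSpace.comap (X t) inferInstance]) ω
              * (P[(fun ω' => X' t ω' j) | MeasurableSpace.comap (X t) inferInstance]) ω)
    (hweak : ∀ Φ : EuclideanSpace ℝ (Fin d) → EuclideanSpace ℝ (Fin d),
        ContDiff ℝ (⊤ : ℕ∞) Φ → HasCompactSupport Φ →
        -∫ ω, (∑ i, ∑ j,
            fderiv ℝ (fun y => Φ y j) (X t ω) (EuclideanSpace.single i 1)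
              * Pmat (X t ω) i j) ∂P
          = ∫ ω, (∑ i, Φ (X t ω) i * X'' t ω i) ∂P) :
    ∫ ω, (∑ i, X t ω i * X'' t ω i) ∂P ≤ 0 := by
  have memLp_two {Z : Ω → EuclideanSpace ℝ (Fin d)} (hZ : Measurable Z)
      (hZ2 : Integrable (fun ω => ‖Z ω‖ ^ 2) P) : MemLp Z 2 P :=
    (memLp_two_iff_integrable_sq_norm hZ.aestronglyMeasurable).2 hZ2
  exact radial_acceleration_nonpos_of_weak_balance_general (hXmeas t).comap_le
    (hXmeas t).aestronglyMeasurable (memLp_two (hX'meas t) hX'2) (hX''meas t).aestronglyMeasurable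
    ((memLp_two (hXmeas t) hX2).norm.integrable_mul (memLp_two (hX''meas t) hX''2).norm)
    hReynolds hweak
end
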